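/- Let H : [0,1] → ℝ be Hölder continuous with 0 < H(x) < 1, set 𝔪 := min_{[0,1]} H + 1/2. Let p : ℝ → (0,∞) be an even C^∞ function with p(ξ) = |ξ| for |ξ| ≥ 2 and p(ξ) = 1 for |ξ| ≤ 1. Let 𝕋, 𝔸 : L²(ℝ;ℂ) → L²((0,1);ℂ) be bounded operators such that for every f and almost every x ∈ (0,1), (𝕋f)(x) = C_*(H(x)) · ∫_ℝ (e^{ixξ} − 1) · |ξ|^{−(H(x)+1/2)} · f(ξ) dξ and (𝔸f)(x) = C_*(H(x)) · ∫_ℝ e^{ixξ} · p(ξ)^{−(H(x)+1/2)} · f(ξ) dξ. Then 𝕋 − 𝔸 is compact and there exist μ > 0 and C > 0 such that 𝒩(t, 𝕋 − 𝔸) ≤ C · t^{1/𝔪 − μ} for all t > 1. -/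

import Mathlib

open MeasureTheory Set Filter Metric
open scoped ENNReal NNReal Real

noncomputable section

/-- Approximation numbers (singular values) of a continuous linear map between
complex normed spaces: `s_k(A) = inf {‖A - F‖ : rank F ≤ k}`. -/
def sVal {E F : Type*} [NormedAddCommGroup E] [NormedAddCommGroup F]
    [NormedSpace ℂ E] [NormedSpace ℂ F] (A : E →L[ℂ] F) (k : ℕ) : ℝ :=
  sInf {c : ℝ | ∃ G : E →L[ℂ] F, LinearMap.rank (G : E →ₗ[ℂ] F) ≤ (k : Cardinal) ∧ c = ‖A - G‖}

/-- Counting function of singular values: `𝒩(t, A) = #{k : s_k(A) > 1/t}`. -/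
def sCount {E F : Type*} [NormedAddCommGroup E] [NormedAddCommGroup F]
    [NormedSpace ℂ E] [NormedSpace ℂ F] (A : E →L[ℂ] F) (t : ℝ) : ℕ :=
  Set.ncard {k : ℕ | 1 / t < sVal A k}

/-- `C_*(H) = (Γ(2H+1) sin(πH) / (2π))^{1/2}`. -/
def Cstar (H : ℝ) : ℝ :=
  Real.sqrt (Real.Gamma (2 * H + 1) * Real.sin (Real.pi * H) / (2 * Real.pi))

/-- Hölder continuity of exponent `r` on a set. -/
def HolderOn (f : ℝ → ℝ) (r : ℝ) (s : Set ℝ) : Prop :=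
  ∃ C : ℝ, ∀ x ∈ s, ∀ y ∈ s, |f x - f y| ≤ C * |x - y| ^ r

/-!
On `|ξ| < R` and on `|ξ| ≥ R` the kernel of `𝕋 - 𝔸` is a product of factors `u(x) v(ξ)` and
`g(α(x) β(ξ))`, where `g` is `exp` or `z ↦ (exp z - 1) / z` and its Taylor coefficients are at most
`1 / j!`: take `β = ξ` for the plane waves and `β = log |ξ|`, `β = log p(ξ)` for the powers. Taylor
truncation at order `N` turns such a product into a kernel of rank `O(N²)`, with an error of order
`qᴺ` times a weight in `ξ` alone. The weight is square integrable because `e^{ixξ} - 1` vanishes at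
`ξ = 0`, because the plane waves of `𝕋` and `𝔸` cancel for large `|ξ|`, and because `H` stays away
from `0` and `1`. So `𝕋 - 𝔸` is within `O(qᴺ)` of operators of rank `O(N²)`, which gives compactness
and `𝒩(t) = O((1 + log t)²)`, less than any power of `t`.
-/

section ApproximationNumbers

variable {E F : Type*} [NormedAddCommGroup E] [NormedAddCommGroup F]
  [NormedSpace ℂ E] [NormedSpace ℂ F]

theorem isCompactOperator_of_rank_le {G : E →L[ℂ] F} {n : ℕ}
    (hG : LinearMap.rank (G : E →ₗ[ℂ] F) ≤ n) : IsCompactOperator G := by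
  have : FiniteDimensional ℂ (LinearMap.range (G : E →ₗ[ℂ] F)) :=
    Module.rank_lt_aleph0_iff.1 (hG.trans_lt (Cardinal.natCast_lt_aleph0))
  let G' : E →L[ℂ] LinearMap.range (G : E →ₗ[ℂ] F) := G.codRestrict _ fun x => ⟨x, rfl⟩
  have : ProperSpace (LinearMap.range (G : E →ₗ[ℂ] F)) := FiniteDimensional.proper ℂ _
  exact (isCompactOperator_of_locallyCompactSpace_dom G').clm_comp (Submodule.subtypeL _)

theorem sVal_le_norm_sub {A G : E →L[ℂ] F} {k : ℕ}
    (hG : LinearMap.rank (G : E →ₗ[ℂ] F) ≤ k) : sVal A k ≤ ‖A - G‖ :=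
  csInf_le ⟨0, by rintro _ ⟨G, -, rfl⟩; exact norm_nonneg _⟩ ⟨G, hG, rfl⟩

theorem sCount_le_of_rank_le {A G : E →L[ℂ] F} {n : ℕ} {t : ℝ}
    (hG : LinearMap.rank (G : E →ₗ[ℂ] F) ≤ n) (hAG : ‖A - G‖ ≤ 1 / t) : sCount A t ≤ n := by
  have hsub : {k : ℕ | 1 / t < sVal A k} ⊆ Finset.range n := fun k hk => by
    by_contra hkn
    have hnk : n ≤ k := by simpa using hkn
    exact (hk.trans_le (sVal_le_norm_sub (hG.trans (mod_cast hnk)))).not_ge hAG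
  simpa [sCount] using Set.ncard_le_ncard hsub (Finset.finite_toSet _)

/-- `D` is approximated by operators of rank `O(Nᵈ)` up to a geometrically small error `O(qᴺ)`. -/
def IsExpApproximable (q : ℝ) (d : ℕ) (D : E →L[ℂ] F) : Prop :=
  ∃ (C : ℝ) (R : ℕ), ∀ N : ℕ, ∃ G : E →L[ℂ] F,
    LinearMap.rank (G : E →ₗ[ℂ] F) ≤ (R * (N + 1) ^ d : ℕ) ∧ ‖D - G‖ ≤ C * q ^ N

theorem IsExpApproximable.isCompactOperator [CompleteSpace F] {q : ℝ} {d : ℕ} {D : E →L[ℂ] F}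
    (hD : IsExpApproximable q d D) (hq0 : 0 ≤ q) (hq1 : q < 1) : IsCompactOperator D := by
  obtain ⟨C, R, h⟩ := hD
  choose G hrank hnorm using h
  refine isCompactOperator_of_tendsto (l := atTop) (F := G) ?_
    (Eventually.of_forall fun N => isCompactOperator_of_rank_le (hrank N))
  rw [tendsto_iff_norm_sub_tendsto_zero]
  refine squeeze_zero (fun _ => norm_nonneg _) (fun N => (norm_sub_rev _ _).trans_le (hnorm N)) ?_
  simpa using (tendsto_pow_atTop_nhds_zero_of_lt_one hq0 hq1).const_mul C

theorem pow_ceil_log_div_log_le_inv {q y : ℝ} (hq0 : 0 < q) (hq1 : q < 1) (hy : 0 < y) :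
    q ^ ⌈Real.log y / -Real.log q⌉₊ ≤ y⁻¹ := by
  have hlog : 0 < -Real.log q := neg_pos.2 (Real.log_neg hq0 hq1)
  rw [← Real.log_le_log_iff (by positivity) (by positivity), Real.log_pow, Real.log_inv]
  have := (div_le_iff₀ hlog).1 (Nat.le_ceil (Real.log y / -Real.log q))
  linarith

theorem IsExpApproximable.exists_sCount_le {q : ℝ} {d : ℕ} {D : E →L[ℂ] F}
    (hD : IsExpApproximable q d D) (hq0 : 0 < q) (hq1 : q < 1) :
    ∃ C > 0, ∀ t : ℝ, 1 < t → (sCount D t : ℝ) ≤ C * (1 + Real.log t) ^ d := by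
  obtain ⟨C, R, h⟩ := hD
  set B := max C 1
  set L := -Real.log q
  have hL : 0 < L := neg_pos.2 (Real.log_neg hq0 hq1)
  have hB : 0 ≤ Real.log B := Real.log_nonneg (le_max_right _ _)
  set M := Real.log B / L + 1 / L + 2
  refine ⟨(R + 1) * M ^ d, by positivity, fun t ht => ?_⟩
  have ht0 : 0 < t := one_pos.trans ht
  have hlogt : 0 ≤ Real.log t := Real.log_nonneg ht.le
  have hBt : 0 < B * t := by positivity
  set N := ⌈Real.log (B * t) / L⌉₊
  obtain ⟨G, hrank, hnorm⟩ := h N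
  have hDG : ‖D - G‖ ≤ 1 / t := calc
    ‖D - G‖ ≤ B * q ^ N := hnorm.trans (by gcongr; exact le_max_left _ _)
    _ ≤ B * (B * t)⁻¹ := by gcongr; exact pow_ceil_log_div_log_le_inv hq0 hq1 hBt
    _ = 1 / t := by rw [mul_inv, mul_inv_cancel_left₀ (by positivity), one_div]
  have hN_le : (N : ℝ) + 1 ≤ M * (1 + Real.log t) := by
    have hlog : Real.log (B * t) = Real.log B + Real.log t :=
      Real.log_mul (by positivity) ht0.ne'
    have hceil := (Nat.ceil_lt_add_one (a := Real.log (B * t) / L) (by rw [hlog]; positivity)).le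
    calc (N : ℝ) + 1 ≤ Real.log B / L + Real.log t / L + 2 := by
          rw [← add_div, ← hlog]; linarith
      _ ≤ Real.log B / L + Real.log t / L + 2
          + (1 / L + Real.log B / L * Real.log t + 2 * Real.log t) :=
        le_add_of_nonneg_right (by positivity)
      _ = M * (1 + Real.log t) := by ring
  calc (sCount D t : ℝ) ≤ (R * (N + 1) ^ d : ℕ) := mod_cast sCount_le_of_rank_le hrank hDG
    _ = R * ((N : ℝ) + 1) ^ d := by push_cast; ring
    _ ≤ (R + 1) * (M * (1 + Real.log t)) ^ d := by gcongr; linarith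
    _ = (R + 1) * M ^ d * (1 + Real.log t) ^ d := by rw [mul_pow, mul_assoc]

end ApproximationNumbers

theorem exists_one_add_log_pow_le_rpow (d : ℕ) {ε : ℝ} (hε : 0 < ε) :
    ∃ C > 0, ∀ t : ℝ, 1 < t → (1 + Real.log t) ^ d ≤ C * t ^ ε := by
  set δ := ε / (d + 1)
  have hδ : 0 < δ := by positivity
  refine ⟨(1 + 1 / δ) ^ d, by positivity, fun t ht => ?_⟩
  have ht0 : 0 < t := one_pos.trans ht
  have hlog : 0 ≤ Real.log t := Real.log_nonneg ht.le
  have hbase : 1 + Real.log t ≤ (1 + 1 / δ) * t ^ δ := calc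
    1 + Real.log t ≤ t ^ δ + t ^ δ / δ :=
      add_le_add (Real.one_le_rpow ht.le hδ.le) (Real.log_le_rpow_div ht0.le hδ)
    _ = (1 + 1 / δ) * t ^ δ := by ring
  have hexp : δ * d ≤ ε := by
    rw [div_mul_eq_mul_div, div_le_iff₀ (by positivity)]
    nlinarith
  calc (1 + Real.log t) ^ d ≤ ((1 + 1 / δ) * t ^ δ) ^ d := by gcongr
    _ = (1 + 1 / δ) ^ d * t ^ (δ * d) := by rw [mul_pow, ← Real.rpow_mul_natCast ht0.le]
    _ ≤ (1 + 1 / δ) ^ d * t ^ ε := by gcongr; exact ht.le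

theorem exists_le_rpow_sub_of_le_log_pow {f : ℝ → ℝ} {C m : ℝ} {d : ℕ} (hC : 0 < C)
    (hf : ∀ t, 1 < t → f t ≤ C * (1 + Real.log t) ^ d) (hm : 0 < m) :
    ∃ μ C', 0 < μ ∧ 0 < C' ∧ ∀ t, 1 < t → f t ≤ C' * t ^ (m - μ) := by
  obtain ⟨B, hB, hlog⟩ := exists_one_add_log_pow_le_rpow d (half_pos hm)
  refine ⟨m / 2, C * B, half_pos hm, by positivity, fun t ht => (hf t ht).trans ?_⟩
  rw [sub_half, mul_assoc]
  gcongr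
  exact hlog t ht

section IntegralKernels

variable {X Y : Type*} [MeasurableSpace X] [MeasurableSpace Y] {ν : Measure X} {μ : Measure Y}

theorem integral_mul_eq_inner_toLp_star {g : Y → ℂ} (hg : MemLp g 2 μ) (f : Lp ℂ 2 μ) :
    ∫ y, g y * f y ∂μ = inner ℂ (hg.star.toLp (star g)) f := by
  rw [L2.inner_def]
  refine integral_congr_ae ?_
  filter_upwards [hg.star.coeFn_toLp] with y hy
  simp [hy, mul_comm]

/-- `G` is the integral operator with kernel `k`. -/
def HasKernel (G : Lp ℂ 2 μ →L[ℂ] Lp ℂ 2 ν) (k : X → Y → ℂ) : Prop :=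
  ∀ f : Lp ℂ 2 μ, ∀ᵐ x ∂ν, G f x = ∫ y, k x y * f y ∂μ

namespace HasKernel

theorem of_const_mul {G : Lp ℂ 2 μ →L[ℂ] Lp ℂ 2 ν} {c : X → ℂ} {k : X → Y → ℂ}
    (h : ∀ f : Lp ℂ 2 μ, ∀ᵐ x ∂ν, G f x = c x * ∫ y, k x y * f y ∂μ) :
    HasKernel G fun x y => c x * k x y := fun f => (h f).mono fun x hx => by
  simp only [hx, mul_assoc, integral_const_mul]

theorem sub {G G' : Lp ℂ 2 μ →L[ℂ] Lp ℂ 2 ν} {k k' : X → Y → ℂ}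
    (hG : HasKernel G k) (hG' : HasKernel G' k') (hk : ∀ᵐ x ∂ν, MemLp (k x) 2 μ)
    (hk' : ∀ᵐ x ∂ν, MemLp (k' x) 2 μ) : HasKernel (G - G') fun x y => k x y - k' x y := by
  intro f
  filter_upwards [hG f, hG' f, hk, hk', Lp.coeFn_sub (G f) (G' f)] with x hx hx' hkx hkx' hsub
  simp only [sub_apply, hsub, Pi.sub_apply, hx, hx', sub_mul]
  exact (integral_sub (hkx.integrable_mul (Lp.memLp f)) (hkx'.integrable_mul (Lp.memLp f))).symm

theorem sum {ι : Type*} {s : Finset ι} {G : ι → Lp ℂ 2 μ →L[ℂ] Lp ℂ 2 ν}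
    {k : ι → X → Y → ℂ} (hG : ∀ i ∈ s, HasKernel (G i) (k i))
    (hk : ∀ i ∈ s, ∀ᵐ x ∂ν, MemLp (k i x) 2 μ) :
    HasKernel (∑ i ∈ s, G i) fun x y => ∑ i ∈ s, k i x y := by
  intro f
  filter_upwards [(eventually_all_finset s).2 fun i hi => hG i hi f, (eventually_all_finset s).2 hk,
    Lp.coeFn_fun_finsetSum s fun i => G i f] with x hGx hkx hsum
  simp only [sum_apply, hsum, Finset.sum_mul]
  rw [Finset.sum_congr rfl hGx]
  exact (integral_finsetSum s fun i hi => (hkx i hi).integrable_mul (Lp.memLp f)).symm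

theorem norm_le [IsFiniteMeasure ν] {G : Lp ℂ 2 μ →L[ℂ] Lp ℂ 2 ν} {k : X → Y → ℂ}
    {w : Y → ℝ} {C : ℝ} (hG : HasKernel G k) (hk : ∀ᵐ x ∂ν, MemLp (k x) 2 μ) (hw : MemLp w 2 μ)
    (hC : 0 ≤ C) (hkw : ∀ᵐ x ∂ν, ∀ᵐ y ∂μ, ‖k x y‖ ≤ C * ‖w y‖) :
    ‖G‖ ≤ measureUnivNNReal ν ^ (2 : ℝ)⁻¹ * (C * ‖hw.toLp w‖) := by
  refine G.opNorm_le_bound (by positivity) fun f => ?_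
  have hGf : ∀ᵐ x ∂ν, ‖G f x‖ ≤ C * ‖hw.toLp w‖ * ‖f‖ := by
    filter_upwards [hG f, hk, hkw] with x hx hkx hkwx
    rw [hx, integral_mul_eq_inner_toLp_star hkx]
    refine (norm_inner_le_norm _ _).trans ?_
    gcongr
    refine Lp.norm_le_mul_norm_of_ae_le_mul ?_
    filter_upwards [hkx.star.coeFn_toLp, hw.coeFn_toLp, hkwx] with y hky hwy hle
    simpa [hky, hwy] using hle
  simpa [mul_assoc] using Lp.norm_le_of_ae_bound (by positivity) hGf

end HasKernel

theorem exists_rank_le_one_hasKernel_mul {u : X → ℂ} {v : Y → ℂ} (hu : MemLp u 2 ν)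
    (hv : MemLp v 2 μ) : ∃ G : Lp ℂ 2 μ →L[ℂ] Lp ℂ 2 ν,
      LinearMap.rank (G : Lp ℂ 2 μ →ₗ[ℂ] Lp ℂ 2 ν) ≤ 1 ∧ HasKernel G fun x y => u x * v y := by
  let φ : Lp ℂ 2 μ →L[ℂ] ℂ := innerSL ℂ (hv.star.toLp (star v))
  refine ⟨φ.smulRight (hu.toLp u), ?_, fun f => ?_⟩
  · have hrange : LinearMap.range
        (φ.smulRight (hu.toLp u) : Lp ℂ 2 μ →ₗ[ℂ] Lp ℂ 2 ν) ≤ ℂ ∙ hu.toLp u := by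
      rintro _ ⟨f, rfl⟩
      exact Submodule.smul_mem _ _ (Submodule.mem_span_singleton_self _)
    refine (Submodule.rank_mono hrange).trans ?_
    simpa using rank_span_le (R := ℂ) {hu.toLp u}
  · filter_upwards [Lp.coeFn_smul (φ f) (hu.toLp u), hu.coeFn_toLp] with x hsmul hux
    have hφ : φ f = ∫ y, v y * f y ∂μ := (integral_mul_eq_inner_toLp_star hv f).symm
    rw [ContinuousLinearMap.smulRight_apply, hsmul, Pi.smul_apply, hux, hφ, smul_eq_mul, mul_comm,
      ← integral_const_mul]
    simp only [mul_assoc]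

/-- Kernels `∑ i, u i x * v i y` with at most `n` terms, where the `u i` are essentially bounded
and the `v i` are dominated by the weight `w`. -/
def IsSeparatedKernel (ν : Measure X) (μ : Measure Y) (w : Y → ℝ) (n : ℕ) (k : X → Y → ℂ) : Prop :=
  ∃ (ι : Type) (_ : Fintype ι) (u : ι → X → ℂ) (v : ι → Y → ℂ), Fintype.card ι ≤ n ∧
    (∀ i, MemLp (u i) ∞ ν) ∧ (∀ i, AEStronglyMeasurable (v i) μ) ∧ (∀ i, v i =O[ae μ] w) ∧
    k = fun x y => ∑ i, u i x * v i y

namespace IsSeparatedKernel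

variable {w w' : Y → ℝ} {n m : ℕ} {k k' : X → Y → ℂ}

theorem mono (hk : IsSeparatedKernel ν μ w n k) (hw : w =O[ae μ] w') (hnm : n ≤ m) :
    IsSeparatedKernel ν μ w' m k := by
  obtain ⟨ι, _, u, v, hcard, hu, hv, hvw, rfl⟩ := hk
  exact ⟨ι, _, u, v, hcard.trans hnm, hu, hv, fun i => (hvw i).trans hw, rfl⟩

theorem sub (hk : IsSeparatedKernel ν μ w n k) (hk' : IsSeparatedKernel ν μ w m k') :
    IsSeparatedKernel ν μ w (n + m) fun x y => k x y - k' x y := by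
  obtain ⟨ι, _, u, v, hcard, hu, hv, hvw, rfl⟩ := hk
  obtain ⟨κ, _, u', v', hcard', hu', hv', hvw', rfl⟩ := hk'
  refine ⟨ι ⊕ κ, inferInstance, Sum.elim u fun j => -u' j, Sum.elim v v', ?_,
    Sum.forall.2 ⟨hu, fun j => (hu' j).neg⟩, Sum.forall.2 ⟨hv, hv'⟩, Sum.forall.2 ⟨hvw, hvw'⟩, ?_⟩
  · simpa using add_le_add hcard hcard'
  · ext x y
    simp [sub_eq_add_neg]

theorem mul (hk : IsSeparatedKernel ν μ w n k) (hk' : IsSeparatedKernel ν μ w' m k') :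
    IsSeparatedKernel ν μ (w * w') (n * m) fun x y => k x y * k' x y := by
  obtain ⟨ι, _, u, v, hcard, hu, hv, hvw, rfl⟩ := hk
  obtain ⟨κ, _, u', v', hcard', hu', hv', hvw', rfl⟩ := hk'
  refine ⟨ι × κ, inferInstance, fun p => u p.1 * u' p.2, fun p => v p.1 * v' p.2, ?_,
    fun p => (hu' p.2).mul (hu p.1), fun p => (hv p.1).mul (hv' p.2),
    fun p => (hvw p.1).mul (hvw' p.2), ?_⟩
  · simpa using Nat.mul_le_mul hcard hcard'
  · ext x y
    simp [Finset.sum_mul_sum, Fintype.sum_prod_type, mul_mul_mul_comm]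

theorem indicator {S : Set Y} (hS : MeasurableSet S)
    (hk : IsSeparatedKernel ν (μ.restrict S) w n k) :
    IsSeparatedKernel ν μ (S.indicator w) n fun x => S.indicator (k x) := by
  obtain ⟨ι, _, u, v, hcard, hu, hv, hvw, rfl⟩ := hk
  refine ⟨ι, _, u, fun i => S.indicator (v i), hcard, hu,
    fun i => (aestronglyMeasurable_indicator_iff hS).2 (hv i), fun i => ?_, ?_⟩
  · obtain ⟨C, hC⟩ := (hvw i).bound
    refine .of_bound C ?_
    filter_upwards [(ae_restrict_iff' hS).1 hC] with y hy
    by_cases hyS : y ∈ S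
    · simpa [hyS] using hy hyS
    · simp [hyS]
  · ext x y
    by_cases hyS : y ∈ S <;> simp [hyS]

theorem aestronglyMeasurable (hk : IsSeparatedKernel ν μ w n k) (x : X) :
    AEStronglyMeasurable (k x) μ := by
  obtain ⟨ι, _, u, v, -, -, hv, -, rfl⟩ := hk
  exact Finset.aestronglyMeasurable_fun_sum _ fun i _ => (hv i).const_mul _

theorem exists_norm_le (hk : IsSeparatedKernel ν μ w n k) :
    ∃ C ≥ 0, ∀ᵐ x ∂ν, ∀ᵐ y ∂μ, ‖k x y‖ ≤ C * ‖w y‖ := by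
  obtain ⟨ι, _, u, v, -, hu, -, hvw, rfl⟩ := hk
  choose C hC hvw using fun i => (hvw i).exists_pos
  refine ⟨∑ i, (eLpNormEssSup (u i) ν).toReal * C i, Finset.sum_nonneg fun i _ => by
    have := hC i; positivity, ?_⟩
  filter_upwards [eventually_all.2 fun i => ae_le_eLpNormEssSup (f := u i) (μ := ν)] with x hux
  filter_upwards [eventually_all.2 fun i => (hvw i).bound] with y hvy
  rw [Finset.sum_mul]
  refine (norm_sum_le _ _).trans (Finset.sum_le_sum fun i _ => ?_)
  have hui : ‖u i x‖ ≤ (eLpNormEssSup (u i) ν).toReal := by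
    rw [← toReal_enorm]
    refine ENNReal.toReal_mono ?_ (hux i)
    simpa using (hu i).eLpNorm_ne_top
  rw [norm_mul, mul_assoc]
  gcongr
  exact hvy i

theorem exists_hasKernel [IsFiniteMeasure ν] (hk : IsSeparatedKernel ν μ w n k)
    (hw : MemLp w 2 μ) : ∃ G : Lp ℂ 2 μ →L[ℂ] Lp ℂ 2 ν,
      LinearMap.rank (G : Lp ℂ 2 μ →ₗ[ℂ] Lp ℂ 2 ν) ≤ n ∧ HasKernel G k := by
  obtain ⟨ι, _, u, v, hcard, hu, hv, hvw, rfl⟩ := hk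
  have hv2 (i : ι) : MemLp (v i) 2 μ := by
    obtain ⟨C, hC⟩ := (hvw i).bound
    exact hw.of_le_mul (hv i) hC
  choose G hrank hG using fun i =>
    exists_rank_le_one_hasKernel_mul ((hu i).mono_exponent le_top) (hv2 i)
  refine ⟨∑ i, G i, ?_, .sum (fun i _ => hG i) fun i _ => .of_forall fun x => (hv2 i).const_mul _⟩
  calc LinearMap.rank ((∑ i, G i : Lp ℂ 2 μ →L[ℂ] Lp ℂ 2 ν) : Lp ℂ 2 μ →ₗ[ℂ] Lp ℂ 2 ν)
      ≤ ∑ i, LinearMap.rank (G i : Lp ℂ 2 μ →ₗ[ℂ] Lp ℂ 2 ν) := by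
        rw [ContinuousLinearMap.toLinearMap_sum]
        exact LinearMap.rank_finsetSum_le _ _
    _ ≤ (Fintype.card ι : Cardinal) := by
        simpa using Finset.sum_le_card_nsmul Finset.univ _ 1 fun i _ => hrank i
    _ ≤ n := mod_cast hcard

end IsSeparatedKernel

/-- `k` is approximated by separated kernels with `O(Nᵈ)` terms up to an error `O(qᴺ)`, both
measured against the weight `w` in the second variable. -/
def IsExpSeparable (ν : Measure X) (μ : Measure Y) (q : ℝ) (d : ℕ) (w : Y → ℝ)
    (k : X → Y → ℂ) : Prop :=
  ∃ C ≥ 0, ∃ R : ℕ, ∀ N : ℕ, ∃ s, IsSeparatedKernel ν μ w (R * (N + 1) ^ d) s ∧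
    ∀ᵐ x ∂ν, ∀ᵐ y ∂μ, ‖k x y - s x y‖ ≤ C * q ^ N * ‖w y‖

theorem isExpSeparable_mul (q : ℝ) {u : X → ℂ} {v : Y → ℂ} {w : Y → ℝ} (hu : MemLp u ∞ ν)
    (hv : AEStronglyMeasurable v μ) (hvw : v =O[ae μ] w) :
    IsExpSeparable ν μ q 0 w fun x y => u x * v y :=
  ⟨0, le_rfl, 1, fun _ => ⟨fun x y => u x * v y,
    ⟨Unit, inferInstance, fun _ => u, fun _ => v, by simp, fun _ => hu, fun _ => hv,
      fun _ => hvw, by simp⟩, by simp⟩⟩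

namespace IsExpSeparable

variable {q : ℝ} {d d' : ℕ} {w w' : Y → ℝ} {k k' : X → Y → ℂ}

theorem mono (hk : IsExpSeparable ν μ q d w k) (hq : 0 ≤ q) (hd : d ≤ d') (hw : w =O[ae μ] w') :
    IsExpSeparable ν μ q d' w' k := by
  obtain ⟨C, hC, R, h⟩ := hk
  obtain ⟨B, hB, hwB⟩ := hw.exists_pos
  refine ⟨C * B, by positivity, R, fun N => ?_⟩
  obtain ⟨s, hs, hks⟩ := h N
  refine ⟨s, hs.mono hw (by gcongr; lia), ?_⟩
  filter_upwards [hks] with x hx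
  filter_upwards [hx, hwB.bound] with y hy hwy
  calc ‖k x y - s x y‖ ≤ C * q ^ N * (B * ‖w' y‖) := hy.trans (by gcongr)
    _ = C * B * q ^ N * ‖w' y‖ := by ring

theorem congr (hk : IsExpSeparable ν μ q d w k) (h : ∀ᵐ x ∂ν, ∀ᵐ y ∂μ, k x y = k' x y) :
    IsExpSeparable ν μ q d w k' := by
  obtain ⟨C, hC, R, hN⟩ := hk
  refine ⟨C, hC, R, fun N => ?_⟩
  obtain ⟨s, hs, hks⟩ := hN N
  refine ⟨s, hs, ?_⟩
  filter_upwards [hks, h] with x hx hkx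
  filter_upwards [hx, hkx] with y hy hky
  rwa [← hky]

theorem sub (hk : IsExpSeparable ν μ q d w k) (hk' : IsExpSeparable ν μ q d w' k')
    (hq : 0 ≤ q) :
    IsExpSeparable ν μ q d (fun y => ‖w y‖ + ‖w' y‖) fun x y => k x y - k' x y := by
  obtain ⟨C, hC, R, h⟩ := hk
  obtain ⟨C', hC', R', h'⟩ := hk'
  refine ⟨C + C', by positivity, R + R', fun N => ?_⟩
  obtain ⟨s, hs, hks⟩ := h N
  obtain ⟨s', hs', hks'⟩ := h' N
  have hw : w =O[ae μ] fun y => ‖w y‖ + ‖w' y‖ := .of_norm_le fun y => by simp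
  have hw' : w' =O[ae μ] fun y => ‖w y‖ + ‖w' y‖ := .of_norm_le fun y => by simp
  refine ⟨_, add_mul R R' _ ▸ (hs.mono hw le_rfl).sub (hs'.mono hw' le_rfl), ?_⟩
  filter_upwards [hks, hks'] with x hx hx'
  filter_upwards [hx, hx'] with y hy hy'
  calc ‖k x y - k' x y - (s x y - s' x y)‖
      ≤ ‖k x y - s x y‖ + ‖k' x y - s' x y‖ := by
        rw [sub_sub_sub_comm]; exact norm_sub_le _ _
    _ ≤ C * q ^ N * ‖w y‖ + C' * q ^ N * ‖w' y‖ := add_le_add hy hy'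
    _ ≤ C * q ^ N * (‖w y‖ + ‖w' y‖) + C' * q ^ N * (‖w y‖ + ‖w' y‖) := by gcongr <;> simp
    _ = (C + C') * q ^ N * ‖‖w y‖ + ‖w' y‖‖ := by
        rw [Real.norm_of_nonneg (add_nonneg (norm_nonneg (w y)) (norm_nonneg (w' y)))]; ring

theorem indicator {S : Set Y} (hS : MeasurableSet S)
    (hk : IsExpSeparable ν (μ.restrict S) q d w k) :
    IsExpSeparable ν μ q d (S.indicator w) fun x => S.indicator (k x) := by
  obtain ⟨C, hC, R, h⟩ := hk
  refine ⟨C, hC, R, fun N => ?_⟩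
  obtain ⟨s, hs, hks⟩ := h N
  refine ⟨_, hs.indicator hS, ?_⟩
  filter_upwards [hks] with x hx
  filter_upwards [(ae_restrict_iff' hS).1 hx] with y hy
  by_cases hyS : y ∈ S
  · simpa [hyS] using hy hyS
  · simp [hyS]

theorem exists_norm_le (hk : IsExpSeparable ν μ q d w k) :
    ∃ C ≥ 0, ∀ᵐ x ∂ν, ∀ᵐ y ∂μ, ‖k x y‖ ≤ C * ‖w y‖ := by
  obtain ⟨C, hC, R, h⟩ := hk
  obtain ⟨s, hs, hks⟩ := h 0
  obtain ⟨B, hB, hsB⟩ := hs.exists_norm_le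
  refine ⟨C + B, by positivity, ?_⟩
  filter_upwards [hks, hsB] with x hx hx'
  filter_upwards [hx, hx'] with y hy hy'
  calc ‖k x y‖ ≤ ‖k x y - s x y‖ + ‖s x y‖ := norm_le_norm_sub_add _ _
    _ ≤ C * q ^ 0 * ‖w y‖ + B * ‖w y‖ := add_le_add hy hy'
    _ = (C + B) * ‖w y‖ := by ring

theorem mul (hk : IsExpSeparable ν μ q d w k) (hk' : IsExpSeparable ν μ q d' w' k')
    (hq0 : 0 ≤ q) (hq1 : q ≤ 1) :
    IsExpSeparable ν μ q (d + d') (w * w') fun x y => k x y * k' x y := by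
  obtain ⟨B, hB, hkB⟩ := hk.exists_norm_le
  obtain ⟨B', hB', hkB'⟩ := hk'.exists_norm_le
  obtain ⟨C, hC, R, h⟩ := hk
  obtain ⟨C', hC', R', h'⟩ := hk'
  refine ⟨B * C' + C * (B' + C'), by positivity, R * R', fun N => ?_⟩
  obtain ⟨s, hs, hks⟩ := h N
  obtain ⟨s', hs', hks'⟩ := h' N
  have hcard : R * (N + 1) ^ d * (R' * (N + 1) ^ d') = R * R' * (N + 1) ^ (d + d') := by ring
  refine ⟨_, hcard ▸ hs.mul hs', ?_⟩
  filter_upwards [hks, hks', hkB, hkB'] with x hx hx' hBx hBx'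
  filter_upwards [hx, hx', hBx, hBx'] with y hy hy' hBy hBy'
  have hs'y : ‖s' x y‖ ≤ (B' + C') * ‖w' y‖ := calc
    ‖s' x y‖ ≤ ‖k' x y‖ + ‖k' x y - s' x y‖ :=
        norm_le_norm_add_norm_sub _ _
    _ ≤ B' * ‖w' y‖ + C' * 1 * ‖w' y‖ :=
        add_le_add hBy' (hy'.trans (by gcongr; exact pow_le_one₀ hq0 hq1))
    _ = (B' + C') * ‖w' y‖ := by ring
  calc ‖k x y * k' x y - s x y * s' x y‖
      = ‖k x y * (k' x y - s' x y) + (k x y - s x y) * s' x y‖ := by ring_nf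
    _ ≤ ‖k x y‖ * ‖k' x y - s' x y‖ + ‖k x y - s x y‖ * ‖s' x y‖ :=
        (norm_add_le _ _).trans_eq (by rw [norm_mul, norm_mul])
    _ ≤ B * ‖w y‖ * (C' * q ^ N * ‖w' y‖) + C * q ^ N * ‖w y‖ * ((B' + C') * ‖w' y‖) := by
        gcongr
    _ = (B * C' + C * (B' + C')) * q ^ N * ‖(w * w') y‖ := by
        rw [Pi.mul_apply, norm_mul]; ring

theorem aestronglyMeasurable (hk : IsExpSeparable ν μ q d w k) (hq0 : 0 ≤ q) (hq1 : q < 1) :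
    ∀ᵐ x ∂ν, AEStronglyMeasurable (k x) μ := by
  obtain ⟨C, -, R, h⟩ := hk
  choose s hs hks using h
  filter_upwards [ae_all_iff.2 hks] with x hx
  refine aestronglyMeasurable_of_tendsto_ae atTop (fun N => (hs N).aestronglyMeasurable x) ?_
  filter_upwards [ae_all_iff.2 hx] with y hy
  rw [tendsto_iff_norm_sub_tendsto_zero]
  refine squeeze_zero (fun _ => norm_nonneg _) (fun N => (norm_sub_rev _ _).trans_le (hy N)) ?_
  simpa using
    ((tendsto_pow_atTop_nhds_zero_of_lt_one hq0 hq1).const_mul C).mul_const ‖w y‖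

theorem memLp (hk : IsExpSeparable ν μ q d w k) (hq0 : 0 ≤ q) (hq1 : q < 1) {p : ℝ≥0∞}
    (hw : MemLp w p μ) : ∀ᵐ x ∂ν, MemLp (k x) p μ := by
  obtain ⟨C, -, hC⟩ := hk.exists_norm_le
  filter_upwards [hk.aestronglyMeasurable hq0 hq1, hC] with x hx hCx
  exact hw.of_le_mul hx hCx

theorem isExpApproximable [IsFiniteMeasure ν] (hk : IsExpSeparable ν μ q d w k) (hq0 : 0 ≤ q)
    (hq1 : q < 1) (hw : MemLp w 2 μ) {D : Lp ℂ 2 μ →L[ℂ] Lp ℂ 2 ν} (hD : HasKernel D k) :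
    IsExpApproximable q d D := by
  have hkL := hk.memLp hq0 hq1 hw
  obtain ⟨C, hC, R, h⟩ := hk
  refine ⟨measureUnivNNReal ν ^ (2 : ℝ)⁻¹ * (C * ‖hw.toLp w‖), R, fun N => ?_⟩
  obtain ⟨s, hs, hks⟩ := h N
  obtain ⟨G, hrank, hG⟩ := hs.exists_hasKernel hw
  obtain ⟨B, -, hsB⟩ := hs.exists_norm_le
  have hsL : ∀ᵐ x ∂ν, MemLp (s x) 2 μ := by
    filter_upwards [hsB] with x hx using hw.of_le_mul (hs.aestronglyMeasurable x) hx
  refine ⟨G, hrank, ((hD.sub hG hkL hsL).norm_le ?_ hw (by positivity) hks).trans_eq (by ring)⟩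
  filter_upwards [hkL, hsL] with x hx hx' using hx.sub hx'

end IsExpSeparable

theorem norm_sub_sum_range_le_of_hasSum {a : ℕ → ℂ} {z c : ℂ} {q : ℝ}
    (ha : ∀ j, ‖a j‖ ≤ 1 / j.factorial) (hc : HasSum (fun j => a j * z ^ j) c) (hq0 : 0 < q)
    (hq1 : q ≤ 1) (N : ℕ) :
    ‖c - ∑ j ∈ Finset.range N, a j * z ^ j‖ ≤ q ^ N * Real.exp (‖z‖ / q) := by
  have hexp : HasSum (fun j : ℕ => (‖z‖ / q) ^ j / j.factorial) (Real.exp (‖z‖ / q)) := by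
    simpa [Real.exp_eq_exp_ℝ] using NormedSpace.expSeries_div_hasSum_exp (‖z‖ / q)
  have hterm (j : ℕ) : ‖a (j + N) * z ^ (j + N)‖ ≤
      q ^ N * ((‖z‖ / q) ^ (j + N) / (j + N).factorial) := calc
    ‖a (j + N) * z ^ (j + N)‖ ≤ 1 / (j + N).factorial * ‖z‖ ^ (j + N) := by
      rw [norm_mul, norm_pow]
      gcongr
      exact ha _
    _ = q ^ (j + N) * ((‖z‖ / q) ^ (j + N) / (j + N).factorial) := by
      rw [div_pow]; field_simp
    _ ≤ q ^ N * ((‖z‖ / q) ^ (j + N) / (j + N).factorial) := by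
      gcongr 1
      exact pow_le_pow_of_le_one hq0.le hq1 (Nat.le_add_left N j)
  have htail := ((hasSum_nat_add_iff' N).2 hc).norm_le_of_bounded
    (((hasSum_nat_add_iff' N).2 hexp).mul_left (q ^ N)) hterm
  refine htail.trans ?_
  gcongr
  exact sub_le_self _ (Finset.sum_nonneg fun j _ => by positivity)

theorem isBigO_pow_exp_mul_norm {s : ℝ} (hs : 0 < s) (β : Y → ℂ) (j : ℕ) :
    (fun y => β y ^ j) =O[ae μ] fun y => Real.exp (s * ‖β y‖) := by
  refine .of_bound (j.factorial / s ^ j) (.of_forall fun y => ?_)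
  have := Real.pow_div_factorial_le_exp (s * ‖β y‖) (by positivity) j
  rw [norm_pow, Real.norm_eq_abs, Real.abs_exp, div_mul_eq_mul_div, le_div_iff₀ (by positivity)]
  rw [div_le_iff₀ (by positivity), mul_pow] at this
  linarith

/-- Taylor truncation: the terms `a j * α x ^ j * β y ^ j` are separated. -/
theorem isExpSeparable_comp_mul {a : ℕ → ℂ} {g : ℂ → ℂ} {q s : ℝ} {α : X → ℂ} {β : Y → ℂ}
    (ha : ∀ j, ‖a j‖ ≤ 1 / j.factorial) (hg : ∀ z, HasSum (fun j => a j * z ^ j) (g z))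
    (hq0 : 0 < q) (hq1 : q ≤ 1) (hs : 0 < s) (hα : AEStronglyMeasurable α ν)
    (hαs : ∀ᵐ x ∂ν, ‖α x‖ ≤ q * s) (hβ : AEStronglyMeasurable β μ) :
    IsExpSeparable ν μ q 1 (fun y => Real.exp (s * ‖β y‖)) fun x y => g (α x * β y) := by
  have hα_pow (j : ℕ) : MemLp (fun x => a j * α x ^ j) ∞ ν := by
    refine memLp_top_of_bound ((hα.pow j).const_mul _) (‖a j‖ * (q * s) ^ j) ?_
    filter_upwards [hαs] with x hx
    rw [norm_mul, norm_pow]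
    gcongr
  refine ⟨1, zero_le_one, 1, fun N =>
    ⟨fun x y => ∑ j : Fin N, a j * α x ^ (j : ℕ) * β y ^ (j : ℕ),
      ⟨Fin N, inferInstance, fun j x => a j * α x ^ (j : ℕ), fun j y => β y ^ (j : ℕ),
        by simp, fun j => hα_pow j, fun j => hβ.pow j,
        fun j => isBigO_pow_exp_mul_norm hs β j, rfl⟩, ?_⟩⟩
  filter_upwards [hαs] with x hx
  refine .of_forall fun y => ?_
  have htail := norm_sub_sum_range_le_of_hasSum ha (hg (α x * β y)) hq0 hq1 N
  rw [← Fin.sum_univ_eq_sum_range (fun j => a j * (α x * β y) ^ j)] at htail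
  simp only [mul_pow, ← mul_assoc] at htail
  refine htail.trans ?_
  rw [one_mul, Real.norm_eq_abs, Real.abs_exp]
  gcongr
  rw [norm_mul, div_le_iff₀ hq0]
  calc ‖α x‖ * ‖β y‖ ≤ q * s * ‖β y‖ := by gcongr
    _ = s * ‖β y‖ * q := by ring

end IntegralKernels

section ExponentialSeries

theorem hasSum_cexp_series (z : ℂ) :
    HasSum (fun j : ℕ => 1 / (j.factorial : ℂ) * z ^ j) (Complex.exp z) := by
  simpa [Complex.exp_eq_exp_ℂ, div_eq_inv_mul] using NormedSpace.expSeries_div_hasSum_exp z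

theorem hasSum_dslope_cexp_zero_series (z : ℂ) :
    HasSum (fun j : ℕ => 1 / ((j + 1).factorial : ℂ) * z ^ j) (dslope Complex.exp 0 z) := by
  rcases eq_or_ne z 0 with rfl | hz
  · simpa using hasSum_single (f := fun j : ℕ => 1 / ((j + 1).factorial : ℂ) * 0 ^ j) 0
      fun j hj => by simp [hj]
  · rw [dslope_of_ne _ hz, slope_def_field, sub_zero, Complex.exp_zero]
    have := ((hasSum_nat_add_iff' 1).2 (hasSum_cexp_series z)).div_const z
    simpa [pow_succ, ← mul_assoc, mul_div_assoc, hz] using this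

end ExponentialSeries

section PowerWeights

theorem memLp_two_abs_rpow_ball {r : ℝ} (hr : -(1 / 2) < r) (R : ℝ) :
    MemLp (fun ξ : ℝ => |ξ| ^ r) 2 (volume.restrict (ball 0 R)) := by
  have hmeas : Measurable fun ξ : ℝ => |ξ| ^ r := by fun_prop
  rw [memLp_two_iff_integrable_sq hmeas.aestronglyMeasurable]
  refine integrableOn_ball_of_norm_le_rpow (C := 1) (α := -(r * 2)) (by simp)
    (by rw [Module.finrank_self]; push_cast; linarith) (.of_forall fun ξ => ?_)
    (hmeas.pow_const 2).aestronglyMeasurable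
  rw [Real.norm_eq_abs, Real.norm_eq_abs, abs_of_nonneg (by positivity),
    ← Real.rpow_mul_natCast (abs_nonneg ξ)]
  simp

theorem integrableOn_abs_rpow_compl_ball {r R : ℝ} (hr : r < -1) (hR : 0 < R) :
    IntegrableOn (fun ξ : ℝ => |ξ| ^ r) (ball 0 R)ᶜ := by
  have hind : (ball (0 : ℝ) R)ᶜ.indicator (fun ξ : ℝ => |ξ| ^ r) =
      fun ξ => (Ici R).indicator (fun y : ℝ => y ^ r) ‖ξ‖ := by
    ext ξ
    simp [indicator]
  rw [← integrable_indicator_iff measurableSet_ball.compl, hind,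
    integrable_fun_norm_addHaar volume (f := (Ici R).indicator fun y : ℝ => y ^ r),
    Module.finrank_self]
  simp only [Nat.sub_self, pow_zero, one_smul]
  rw [integrableOn_indicator_iff measurableSet_Ici, inter_eq_left.2 (Ici_subset_Ioi.2 hR),
    integrableOn_Ici_iff_integrableOn_Ioi]
  exact integrableOn_Ioi_rpow_of_lt hr hR

theorem memLp_two_abs_rpow_compl_ball {r R : ℝ} (hr : r < -(1 / 2)) (hR : 0 < R) :
    MemLp (fun ξ : ℝ => |ξ| ^ r) 2 (volume.restrict (ball 0 R)ᶜ) := by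
  have hmeas : Measurable fun ξ : ℝ => |ξ| ^ r := by fun_prop
  rw [memLp_two_iff_integrable_sq hmeas.aestronglyMeasurable]
  simp only [← Real.rpow_mul_natCast (abs_nonneg _)]
  exact integrableOn_abs_rpow_compl_ball (by push_cast; linarith) hR

theorem rpow_mul_exp_mul_abs_log_le {y : ℝ} (hy : 0 < y) (a s : ℝ) :
    y ^ a * Real.exp (s * |Real.log y|) ≤ y ^ (a + s) + y ^ (a - s) := by
  simp only [Real.rpow_def_of_pos hy, ← Real.exp_add]
  rcases abs_cases (Real.log y) with ⟨h, -⟩ | ⟨h, -⟩ <;> rw [h]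
  · rw [mul_comm s, ← mul_add]
    exact le_add_of_nonneg_right (Real.exp_pos _).le
  · rw [mul_neg, mul_comm s, ← sub_eq_add_neg, ← mul_sub]
    exact le_add_of_nonneg_left (Real.exp_pos _).le

theorem memLp_abs_rpow_mul_exp_mul_abs_log {p : ℝ≥0∞} {S : Set ℝ} {a s : ℝ}
    (hadd : MemLp (fun ξ : ℝ => |ξ| ^ (a + s)) p (volume.restrict S))
    (hsub : MemLp (fun ξ : ℝ => |ξ| ^ (a - s)) p (volume.restrict S)) :
    MemLp (fun ξ : ℝ => |ξ| ^ a * Real.exp (s * |(Real.log |ξ|)|)) p (volume.restrict S) := by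
  have hmeas : Measurable fun ξ : ℝ => |ξ| ^ a * Real.exp (s * |(Real.log |ξ|)|) := by fun_prop
  refine (hadd.add hsub).of_le hmeas.aestronglyMeasurable (ae_restrict_of_ae ?_)
  filter_upwards [Measure.ae_ne volume 0] with ξ hξ
  rw [Real.norm_of_nonneg (by positivity), Pi.add_apply, Real.norm_of_nonneg (by positivity)]
  exact rpow_mul_exp_mul_abs_log_le (abs_pos.2 hξ) a s

end PowerWeights

theorem norm_one_div_factorial_succ_le (j : ℕ) :
    ‖1 / ((j + 1).factorial : ℂ)‖ ≤ 1 / j.factorial := by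
  rw [norm_div, norm_one, Complex.norm_natCast]
  gcongr
  exact j.le_succ

section ExponentialKernels

theorem isExpSeparable_comp_I_mul {ν μ : Measure ℝ} {a : ℕ → ℂ} {g : ℂ → ℂ} {q ρ : ℝ}
    (ha : ∀ j, ‖a j‖ ≤ 1 / j.factorial) (hg : ∀ z, HasSum (fun j => a j * z ^ j) (g z))
    (hq0 : 0 < q) (hq1 : q ≤ 1) (hρ : 0 < ρ) (hν : ∀ᵐ x ∂ν, |x| ≤ ρ) :
    IsExpSeparable ν μ q 1 (fun ξ => Real.exp (ρ / q * |ξ|))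
      fun x ξ => g (Complex.I * x * ξ) := by
  have h := isExpSeparable_comp_mul (ν := ν) (μ := μ) (s := ρ / q) (α := fun x => Complex.I * x)
    (β := fun ξ => ξ) ha hg hq0 hq1 (by positivity) (by fun_prop)
    (by simpa [mul_div_cancel₀ _ hq0.ne'] using hν) (by fun_prop)
  simpa using h

theorem isExpSeparable_rpow {X Y : Type*} [MeasurableSpace X] [MeasurableSpace Y]
    {ν : Measure X} {μ : Measure Y} {h : X → ℝ} {ρ : Y → ℝ} {q s : ℝ} (hq0 : 0 < q)
    (hq1 : q ≤ 1) (hs : 0 < s) (hh : AEMeasurable h ν) (hhs : ∀ᵐ x ∂ν, |h x| ≤ q * s)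
    (hρ : AEMeasurable ρ μ) (hρ0 : ∀ᵐ y ∂μ, 0 < ρ y) :
    IsExpSeparable ν μ q 1 (fun y => Real.exp (s * |Real.log (ρ y)|))
      fun x y => ((ρ y ^ h x : ℝ) : ℂ) := by
  have hexp := isExpSeparable_comp_mul (α := fun x => (h x : ℂ))
    (β := fun y => (Real.log (ρ y) : ℂ)) (fun j => by simp) hasSum_cexp_series hq0 hq1 hs
    hh.complex_ofReal.aestronglyMeasurable (by simpa using hhs)
    hρ.log.complex_ofReal.aestronglyMeasurable
  simp only [Complex.norm_real, Real.norm_eq_abs] at hexp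
  refine hexp.congr (.of_forall fun x => ?_)
  filter_upwards [hρ0] with y hy
  rw [Real.rpow_def_of_pos hy, mul_comm (Real.log _)]
  push_cast
  rfl

end ExponentialKernels

section LebesgueSpaces

theorem memLp_of_restrict_of_restrict_compl {X E : Type*} [MeasurableSpace X]
    [NormedAddCommGroup E] {μ : Measure X} {S : Set X} {p : ℝ≥0∞} {f : X → E}
    (hS : MeasurableSet S) (h : MemLp f p (μ.restrict S)) (hc : MemLp f p (μ.restrict Sᶜ)) :
    MemLp f p μ := by
  classical simpa using h.piecewise hS hc

theorem memLp_restrict_ball_of_continuous {E : Type*} [NormedAddCommGroup E]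
    {f : ℝ → E} (hf : Continuous f) (R : ℝ) (p : ℝ≥0∞) :
    MemLp f p (volume.restrict (ball 0 R)) := by
  obtain ⟨C, hC⟩ := (isCompact_closedBall (0 : ℝ) R).exists_bound_of_continuousOn hf.continuousOn
  have : IsFiniteMeasure ((volume : Measure ℝ).restrict (ball 0 R)) :=
    isFiniteMeasure_restrict.2 measure_ball_lt_top.ne
  exact .of_bound hf.aestronglyMeasurable C <| (ae_restrict_mem measurableSet_ball).mono
    fun ξ hξ => hC ξ (ball_subset_closedBall hξ)

end LebesgueSpaces

section Kernels

/-- The kernel `(e^{ixξ} - 1) |ξ|^{-(h + 1/2)}` of the multifractional Brownian motion operator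
with Hurst parameter `h`, without the normalization `C_*(h)`. -/
def mBMKernel (h x ξ : ℝ) : ℂ :=
  (Complex.exp (Complex.I * x * ξ) - 1) * ((|ξ| ^ (-(h + 1 / 2)) : ℝ) : ℂ)

/-- The kernel `e^{ixξ} p(ξ)^{-(h + 1/2)}` of the pseudodifferential operator with regularized
symbol `p`, without the normalization `C_*(h)`. -/
def psdoKernel (p : ℝ → ℝ) (h x ξ : ℝ) : ℂ :=
  Complex.exp (Complex.I * x * ξ) * ((p ξ ^ (-(h + 1 / 2)) : ℝ) : ℂ)

theorem norm_cexp_I_mul (x ξ : ℝ) : ‖Complex.exp (Complex.I * x * ξ)‖ = 1 := by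
  rw [mul_assoc, ← Complex.ofReal_mul, Complex.norm_exp_I_mul_ofReal]

theorem norm_mBMKernel_le_mul_abs_rpow (h x : ℝ) {ξ : ℝ} (hξ : ξ ≠ 0) :
    ‖mBMKernel h x ξ‖ ≤ |x| * |ξ| ^ (1 / 2 - h) := by
  have hwave : ‖Complex.exp (Complex.I * x * ξ) - 1‖ ≤ |x| * |ξ| := by
    rw [mul_assoc, ← Complex.ofReal_mul, ← abs_mul]
    exact Real.norm_exp_I_mul_ofReal_sub_one_le
  calc ‖mBMKernel h x ξ‖ ≤ |x| * |ξ| * |ξ| ^ (-(h + 1 / 2)) := by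
        rw [mBMKernel, norm_mul, Complex.norm_of_nonneg (by positivity)]
        gcongr
    _ = |x| * |ξ| ^ (1 / 2 - h) := by
        have hadd := Real.rpow_add (abs_pos.2 hξ) 1 (-(h + 1 / 2))
        rw [Real.rpow_one] at hadd
        rw [mul_assoc, ← hadd]
        ring_nf

theorem norm_mBMKernel_le_two_mul_abs_rpow (h x ξ : ℝ) :
    ‖mBMKernel h x ξ‖ ≤ 2 * |ξ| ^ (-(h + 1 / 2)) := by
  rw [mBMKernel, norm_mul, Complex.norm_of_nonneg (by positivity)]
  gcongr
  calc ‖Complex.exp (Complex.I * x * ξ) - 1‖ ≤ ‖Complex.exp (Complex.I * x * ξ)‖ + ‖(1 : ℂ)‖ :=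
        norm_sub_le _ _
    _ = 2 := by rw [norm_cexp_I_mul, norm_one, one_add_one_eq_two]

theorem memLp_two_mBMKernel {h : ℝ} (h0 : 0 < h) (h1 : h < 1) (x : ℝ) :
    MemLp (mBMKernel h x) 2 volume := by
  have hmeas : Measurable (mBMKernel h x) := by unfold mBMKernel; fun_prop
  refine memLp_of_restrict_of_restrict_compl (measurableSet_ball (x := 0) (ε := 1)) ?_ ?_
  · refine (memLp_two_abs_rpow_ball (r := 1 / 2 - h) (by linarith) 1).of_le_mul (c := |x|)
      hmeas.aestronglyMeasurable (ae_restrict_of_ae ?_)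
    filter_upwards [Measure.ae_ne volume 0] with ξ hξ
    rw [Real.norm_of_nonneg (by positivity)]
    exact norm_mBMKernel_le_mul_abs_rpow h x hξ
  · refine (memLp_two_abs_rpow_compl_ball (r := -(h + 1 / 2)) (by linarith) one_pos).of_le_mul
      (c := 2) hmeas.aestronglyMeasurable (.of_forall fun ξ => ?_)
    rw [Real.norm_of_nonneg (by positivity)]
    exact norm_mBMKernel_le_two_mul_abs_rpow h x ξ

theorem memLp_two_psdoKernel {p : ℝ → ℝ} {h R : ℝ} (hp : Continuous p) (hp0 : ∀ ξ, 0 < p ξ)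
    (hR : 0 < R) (hpR : ∀ ξ, R ≤ |ξ| → p ξ = |ξ|) (h0 : 0 < h) (x : ℝ) :
    MemLp (psdoKernel p h x) 2 volume := by
  have hcont : Continuous (psdoKernel p h x) := by
    have := hp.rpow_const (p := -(h + 1 / 2)) fun ξ => .inl (hp0 ξ).ne'
    unfold psdoKernel
    fun_prop
  refine memLp_of_restrict_of_restrict_compl measurableSet_ball
    (memLp_restrict_ball_of_continuous hcont R 2) ?_
  refine (memLp_two_abs_rpow_compl_ball (r := -(h + 1 / 2)) (by linarith) hR).of_le
    hcont.aestronglyMeasurable ?_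
  filter_upwards [ae_restrict_mem measurableSet_ball.compl] with ξ hξ
  rw [psdoKernel, norm_mul, norm_cexp_I_mul, one_mul, hpR ξ (by simpa using hξ),
    Complex.norm_real]

end Kernels

section KernelDifference

variable {ν : Measure ℝ} {H p : ℝ → ℝ} {q s ρ R : ℝ}

/-- Near `0` the zero of `e^{ixξ} - 1` is factored out through `dslope`, which leaves the square
integrable weight `|ξ|^{1/2 - s}`. -/
theorem exists_isExpSeparable_mBMKernel_ball (hq0 : 0 < q) (hq1 : q ≤ 1) (hs0 : 0 < s)
    (hs1 : s < 1) (hρ : 0 < ρ) (hν : ∀ᵐ x ∂ν, |x| ≤ ρ) (hH : AEMeasurable H ν)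
    (hHs : ∀ᵐ x ∂ν, |H x| ≤ q * s) (R : ℝ) :
    ∃ w, MemLp w 2 (volume.restrict (ball 0 R)) ∧
      IsExpSeparable ν (volume.restrict (ball 0 R)) q 2 w fun x => mBMKernel (H x) x := by
  have hne : ∀ᵐ ξ ∂(volume : Measure ℝ).restrict (ball 0 R), ξ ≠ 0 :=
    ae_restrict_of_ae (Measure.ae_ne volume 0)
  have hlin : IsExpSeparable ν (volume.restrict (ball 0 R)) q 0 (fun ξ => |ξ| ^ (1 / 2 : ℝ))
      fun x ξ => Complex.I * x * ((ξ * |ξ| ^ (-(1 / 2 : ℝ)) : ℝ) : ℂ) := by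
    refine isExpSeparable_mul q (memLp_top_of_bound (by fun_prop) ρ (by simpa using hν))
      (by fun_prop) (.of_bound 1 ?_)
    filter_upwards [hne] with ξ hξ
    have hadd := Real.rpow_add (abs_pos.2 hξ) 1 (-(1 / 2))
    rw [Real.rpow_one] at hadd
    rw [Complex.norm_real, norm_mul, Real.norm_eq_abs, Real.norm_of_nonneg (by positivity), ← hadd,
      Real.norm_of_nonneg (by positivity)]
    norm_num
  have hpow := isExpSeparable_rpow (h := fun x => -H x) hq0 hq1 hs0 hH.neg (by simpa using hHs)
    (μ := volume.restrict (ball 0 R)) (ρ := fun ξ : ℝ => |ξ|) (by fun_prop)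
    (hne.mono fun ξ => abs_pos.2)
  have hwave := isExpSeparable_comp_I_mul (μ := volume.restrict (ball 0 R))
    norm_one_div_factorial_succ_le hasSum_dslope_cexp_zero_series hq0 hq1 hρ hν
  refine ⟨_, ?_, ((hlin.mul hpow hq0.le hq1).mul hwave hq0.le hq1).congr
    (.of_forall fun x => ?_)⟩
  · exact (memLp_restrict_ball_of_continuous (by fun_prop) R ∞).mul
      (memLp_abs_rpow_mul_exp_mul_abs_log (memLp_two_abs_rpow_ball (by linarith) R)
        (memLp_two_abs_rpow_ball (by linarith) R))
  · filter_upwards [hne] with ξ hξ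
    have hdslope := sub_smul_dslope Complex.exp 0 (Complex.I * x * ξ)
    rw [smul_eq_mul, sub_zero, Complex.exp_zero] at hdslope
    rw [mBMKernel, ← hdslope, neg_add, Real.rpow_add (abs_pos.2 hξ)]
    push_cast
    ring

theorem exists_isExpSeparable_psdoKernel_ball (hq0 : 0 < q) (hq1 : q ≤ 1) (hs0 : 0 < s)
    (hρ : 0 < ρ) (hν : ∀ᵐ x ∂ν, |x| ≤ ρ) (hH : AEMeasurable H ν)
    (hHs : ∀ᵐ x ∂ν, |H x| ≤ q * s) (hp : Continuous p) (hp0 : ∀ ξ, 0 < p ξ) (R : ℝ) :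
    ∃ w, MemLp w 2 (volume.restrict (ball 0 R)) ∧
      IsExpSeparable ν (volume.restrict (ball 0 R)) q 2 w fun x => psdoKernel p (H x) x := by
  have hwave := isExpSeparable_comp_I_mul (μ := volume.restrict (ball 0 R))
    (fun j => by simp) hasSum_cexp_series hq0 hq1 hρ hν
  have hpow := isExpSeparable_rpow (h := fun x => -(H x + 1 / 2)) (s := s + 1 / (2 * q)) hq0 hq1
    (by positivity) (hH.add_const _).neg ?_ (μ := volume.restrict (ball 0 R)) hp.aemeasurable
    (.of_forall hp0)
  · have hlog : Continuous fun ξ => Real.log (p ξ) := hp.log fun ξ => (hp0 ξ).ne'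
    exact ⟨_, memLp_restrict_ball_of_continuous (by fun_prop) R 2, hwave.mul hpow hq0.le hq1⟩
  · filter_upwards [hHs] with x hx
    rw [abs_neg]
    calc |H x + 1 / 2| ≤ q * s + 1 / 2 := (abs_add_le _ _).trans (by gcongr; norm_num)
      _ = q * (s + 1 / (2 * q)) := by field_simp

/-- At infinity the factor `|ξ|^{-3/2}` is split off, which leaves `|ξ|^{1 - H}` and the square
integrable weight `|ξ|^{-3/2 + s}`. -/
theorem exists_isExpSeparable_abs_rpow_compl_ball (hq0 : 0 < q) (hq1 : q ≤ 1) (hs0 : 0 < s)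
    (hs1 : s < 1) (hH : AEMeasurable H ν) (hHs : ∀ᵐ x ∂ν, |1 - H x| ≤ q * s) (hR : 0 < R) :
    ∃ w, MemLp w 2 (volume.restrict (ball 0 R)ᶜ) ∧
      IsExpSeparable ν (volume.restrict (ball 0 R)ᶜ) q 1 w
        fun x ξ => ((|ξ| ^ (-(H x + 1 / 2)) : ℝ) : ℂ) := by
  have hne : ∀ᵐ ξ ∂(volume : Measure ℝ).restrict (ball 0 R)ᶜ, ξ ≠ 0 :=
    ae_restrict_of_ae (Measure.ae_ne volume 0)
  have hdecay : IsExpSeparable ν (volume.restrict (ball 0 R)ᶜ) q 0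
      (fun ξ => |ξ| ^ (-(3 / 2) : ℝ)) fun _ ξ => 1 * ((|ξ| ^ (-(3 / 2) : ℝ) : ℝ) : ℂ) :=
    isExpSeparable_mul q (memLp_top_const 1) (Measurable.aestronglyMeasurable (by fun_prop))
      (.of_bound 1 (.of_forall fun ξ => by simp))
  have hpow := isExpSeparable_rpow (h := fun x => 1 - H x) hq0 hq1 hs0 (hH.const_sub 1) hHs
    (μ := volume.restrict (ball 0 R)ᶜ) (ρ := fun ξ : ℝ => |ξ|) (by fun_prop)
    (hne.mono fun ξ => abs_pos.2)
  refine ⟨_, ?_, (hdecay.mul hpow hq0.le hq1).congr (.of_forall fun x => ?_)⟩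
  · exact memLp_abs_rpow_mul_exp_mul_abs_log (memLp_two_abs_rpow_compl_ball (by linarith) hR)
        (memLp_two_abs_rpow_compl_ball (by linarith) hR)
  · filter_upwards [hne] with ξ hξ
    rw [one_mul, ← Complex.ofReal_mul, ← Real.rpow_add (abs_pos.2 hξ)]
    ring_nf

theorem mBMKernel_sub_psdoKernel (hpR : ∀ ξ, R ≤ |ξ| → p ξ = |ξ|) (h x ξ : ℝ) :
    mBMKernel h x ξ - psdoKernel p h x ξ =
      (ball 0 R).indicator (fun ξ => mBMKernel h x ξ - psdoKernel p h x ξ) ξ -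
        (ball 0 R)ᶜ.indicator (fun ξ => ((|ξ| ^ (-(h + 1 / 2)) : ℝ) : ℂ)) ξ := by
  by_cases hξ : ξ ∈ ball (0 : ℝ) R
  · simp [hξ]
  · have hpξ : p ξ = |ξ| := hpR ξ (by simpa using hξ)
    simp only [hξ, indicator_of_notMem, not_false_eq_true, mem_compl_iff, indicator_of_mem,
      mBMKernel, psdoKernel, hpξ]
    ring

theorem exists_isExpSeparable_mBMKernel_sub_psdoKernel (hq0 : 0 < q) (hq1 : q ≤ 1) (hs0 : 0 < s)
    (hs1 : s < 1) (hρ : 0 < ρ) (hν : ∀ᵐ x ∂ν, |x| ≤ ρ) (hH : AEMeasurable H ν)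
    (hHs : ∀ᵐ x ∂ν, |H x| ≤ q * s) (hHs' : ∀ᵐ x ∂ν, |1 - H x| ≤ q * s) (hp : Continuous p)
    (hp0 : ∀ ξ, 0 < p ξ) (hR : 0 < R) (hpR : ∀ ξ, R ≤ |ξ| → p ξ = |ξ|) :
    ∃ w, MemLp w 2 volume ∧ IsExpSeparable ν volume q 2 w
      fun x ξ => mBMKernel (H x) x ξ - psdoKernel p (H x) x ξ := by
  obtain ⟨w₁, hw₁, h₁⟩ := exists_isExpSeparable_mBMKernel_ball hq0 hq1 hs0 hs1 hρ hν hH hHs R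
  obtain ⟨w₂, hw₂, h₂⟩ := exists_isExpSeparable_psdoKernel_ball hq0 hq1 hs0 hρ hν hH hHs hp hp0 R
  obtain ⟨w₃, hw₃, h₃⟩ := exists_isExpSeparable_abs_rpow_compl_ball hq0 hq1 hs0 hs1 hH hHs' hR
  have hin := (h₁.sub h₂ hq0.le).indicator measurableSet_ball
  have hout := (h₃.mono hq0.le one_le_two (Asymptotics.isBigO_refl _ _)).indicator
    measurableSet_ball.compl
  refine ⟨_, ?_, (hin.sub hout hq0.le).congr (.of_forall fun x => .of_forall fun ξ =>
    (mBMKernel_sub_psdoKernel hpR (H x) x ξ).symm)⟩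
  exact ((memLp_indicator_iff_restrict measurableSet_ball).2 (hw₁.norm.add hw₂.norm)).norm.add
    ((memLp_indicator_iff_restrict measurableSet_ball.compl).2 hw₃).norm

end KernelDifference

theorem isExpApproximable_mBM_sub_psdo {ν : Measure ℝ} [IsFiniteMeasure ν] {H p : ℝ → ℝ}
    {c : ℝ → ℂ} {a b ρ R : ℝ} (ha : 0 < a) (hb : b < 1) (hH : AEMeasurable H ν)
    (hHab : ∀ᵐ x ∂ν, H x ∈ Icc a b) (hc : MemLp c ∞ ν) (hρ : 0 < ρ) (hν : ∀ᵐ x ∂ν, |x| ≤ ρ)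
    (hp : Continuous p) (hp0 : ∀ ξ, 0 < p ξ) (hR : 0 < R) (hpR : ∀ ξ, R ≤ |ξ| → p ξ = |ξ|)
    {T A : Lp ℂ 2 (volume : Measure ℝ) →L[ℂ] Lp ℂ 2 ν}
    (hT : HasKernel T fun x ξ => c x * mBMKernel (H x) x ξ)
    (hA : HasKernel A fun x ξ => c x * psdoKernel p (H x) x ξ) :
    ∃ q, 0 < q ∧ q < 1 ∧ IsExpApproximable q 2 (T - A) := by
  -- The room between `max b (1 - a)` and `1` is shared between the ratio and the weight exponent.
  obtain ⟨m, hm, hm1⟩ := exists_between (max_lt hb (max_lt (sub_lt_self 1 ha) one_pos))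
  obtain ⟨hbm, ham, hm0⟩ : b < m ∧ 1 - a < m ∧ 0 < m := by simpa using hm
  have hq0 : 0 < √m := Real.sqrt_pos.2 hm0
  have hq1 : √m < 1 := by rwa [Real.sqrt_lt' one_pos, one_pow]
  have hHm : ∀ᵐ x ∂ν, |H x| ≤ √m * √m ∧ |1 - H x| ≤ √m * √m := by
    filter_upwards [hHab] with x hx
    rw [Real.mul_self_sqrt hm0.le, abs_le, abs_le]
    refine ⟨⟨?_, ?_⟩, ?_, ?_⟩ <;> linarith [hx.1, hx.2]
  obtain ⟨w, hw, hk⟩ := exists_isExpSeparable_mBMKernel_sub_psdoKernel hq0 hq1.le hq0 hq1 hρ hν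
    hH (hHm.mono fun x hx => hx.1) (hHm.mono fun x hx => hx.2) hp hp0 hR hpR
  have hck : IsExpSeparable ν volume √m 0 1 fun x (_ : ℝ) => c x * 1 :=
    isExpSeparable_mul √m hc (by fun_prop) (.of_norm_le fun _ => by simp)
  have hD := hT.sub hA
    (hHab.mono fun x hx =>
      (memLp_two_mBMKernel (ha.trans_le hx.1) (hx.2.trans_lt hb) x).const_mul (c x))
    (hHab.mono fun x hx =>
      (memLp_two_psdoKernel hp hp0 hR hpR (ha.trans_le hx.1) x).const_mul (c x))
  refine ⟨√m, hq0, hq1, ((hck.mul hk hq0.le hq1.le).congr ?_).isExpApproximable hq0.le hq1 ?_ hD⟩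
  · exact .of_forall fun x => .of_forall fun ξ => by ring
  · rwa [one_mul]

theorem continuousOn_Cstar : ContinuousOn Cstar (Ioo 0 1) := by
  have hGamma : ContinuousOn (fun H : ℝ => Real.Gamma (2 * H + 1)) (Ioo 0 1) := fun h hh => by
    have hdiff : DifferentiableAt ℝ Real.Gamma (2 * h + 1) :=
      Real.differentiableAt_Gamma fun m => by
        have : (0 : ℝ) ≤ m := m.cast_nonneg
        linarith [hh.1]
    exact (hdiff.continuousAt.comp' (f := fun H : ℝ => 2 * H + 1)
      (by fun_prop)).continuousWithinAt
  exact ((hGamma.mul (by fun_prop)).div_const _).sqrt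

theorem HolderOn.continuousOn {f : ℝ → ℝ} {r : ℝ} {s : Set ℝ} (hf : HolderOn f r s)
    (hr : 0 < r) : ContinuousOn f s := by
  obtain ⟨C, hC⟩ := hf
  refine HolderOnWith.continuousOn (C := C.toNNReal) (r := r.toNNReal) (fun x hx y hy => ?_)
    (Real.toNNReal_pos.2 hr)
  rw [edist_dist, edist_dist, Real.coe_toNNReal r hr.le,
    ENNReal.ofReal_rpow_of_nonneg dist_nonneg hr.le, ENNReal.ofNNReal_toNNReal,
    ← ENNReal.ofReal_mul' (by positivity)]
  exact ENNReal.ofReal_le_ofReal (hC x hx y hy)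

theorem exists_mapsTo_Icc_of_mapsTo_Ioo {X : Type*} [TopologicalSpace X] {K : Set X}
    (hK : IsCompact K) {f : X → ℝ} {a b : ℝ} (hab : a < b) (hf : ContinuousOn f K)
    (hmaps : MapsTo f K (Ioo a b)) : ∃ a' b', a < a' ∧ b' < b ∧ MapsTo f K (Icc a' b') := by
  rcases K.eq_empty_or_nonempty with rfl | hne
  · exact ⟨b, a, hab, hab, mapsTo_empty _ _⟩
  · obtain ⟨x, hx, hmin⟩ := hK.exists_isMinOn hne hf
    obtain ⟨y, hy, hmax⟩ := hK.exists_isMaxOn hne hf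
    exact ⟨f x, f y, (hmaps hx).1, (hmaps hy).2, fun z hz => ⟨hmin hz, hmax hz⟩⟩

theorem mBM_operator_minus_psdo_counting_bound_general {H p : ℝ → ℝ} {R : ℝ}
    (hH : ContinuousOn H (Icc 0 1)) (hrange : ∀ x ∈ Icc (0 : ℝ) 1, 0 < H x ∧ H x < 1)
    (hp : Continuous p) (hp0 : ∀ ξ, 0 < p ξ) (hR : 0 < R) (hpR : ∀ ξ, R ≤ |ξ| → p ξ = |ξ|)
    {T A : Lp ℂ 2 (volume : Measure ℝ) →L[ℂ] Lp ℂ 2 (volume.restrict (Ioo (0 : ℝ) 1))}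
    (hT : ∀ f : Lp ℂ 2 (volume : Measure ℝ), ∀ᵐ x ∂volume.restrict (Ioo (0 : ℝ) 1),
      T f x = (Cstar (H x) : ℂ) * ∫ ξ : ℝ, mBMKernel (H x) x ξ * f ξ)
    (hA : ∀ f : Lp ℂ 2 (volume : Measure ℝ), ∀ᵐ x ∂volume.restrict (Ioo (0 : ℝ) 1),
      A f x = (Cstar (H x) : ℂ) * ∫ ξ : ℝ, psdoKernel p (H x) x ξ * f ξ) :
    IsCompactOperator (T - A) ∧
      ∃ C > 0, ∀ t : ℝ, 1 < t → (sCount (T - A) t : ℝ) ≤ C * (1 + Real.log t) ^ 2 := by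
  have hmem : ∀ᵐ x ∂(volume : Measure ℝ).restrict (Ioo 0 1), x ∈ Icc (0 : ℝ) 1 :=
    (ae_restrict_mem measurableSet_Ioo).mono fun x hx => Ioo_subset_Icc_self hx
  obtain ⟨a, b, ha, hb, hab⟩ := exists_mapsTo_Icc_of_mapsTo_Ioo isCompact_Icc one_pos hH hrange
  have hc : ContinuousOn (fun x => (Cstar (H x) : ℂ)) (Icc 0 1) :=
    Complex.continuous_ofReal.comp_continuousOn (continuousOn_Cstar.comp hH hrange)
  obtain ⟨M, hM⟩ := isCompact_Icc.exists_bound_of_continuousOn hc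
  have hcmem : MemLp (fun x => (Cstar (H x) : ℂ)) ∞ (volume.restrict (Ioo 0 1)) :=
    memLp_top_of_bound ((hc.mono Ioo_subset_Icc_self).aestronglyMeasurable measurableSet_Ioo) M
      (hmem.mono hM)
  obtain ⟨q, hq0, hq1, hD⟩ := isExpApproximable_mBM_sub_psdo ha hb
    ((hH.mono Ioo_subset_Icc_self).aemeasurable measurableSet_Ioo) (hmem.mono fun x hx => hab hx)
    hcmem one_pos (hmem.mono fun x hx => abs_le.2 ⟨by linarith [hx.1], hx.2⟩) hp hp0 hR hpR
    (.of_const_mul hT) (.of_const_mul hA)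
  exact ⟨hD.isCompactOperator hq0.le hq1, hD.exists_sCount_le hq0 hq1⟩

/-- The mBM operator 𝕋 is approximated, in the sense of singular value counting functions,
by the pseudodifferential operator 𝔸 with regularized symbol. -/
theorem mBM_operator_minus_psdo_counting_bound
    (H : ℝ → ℝ) (r : ℝ) (hr : 0 < r) (hHol : HolderOn H r (Icc 0 1))
    (hrange : ∀ x ∈ Icc (0:ℝ) 1, 0 < H x ∧ H x < 1)
    (Hmin : ℝ) (hHmin : IsLeast (H '' Icc 0 1) Hmin)
    -- the regularized symbol p
    (p : ℝ → ℝ) (hpsm : ContDiff ℝ (⊤ : ℕ∞) p) (hppos : ∀ ξ : ℝ, 0 < p ξ)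
    (hpeven : ∀ ξ : ℝ, p (-ξ) = p ξ)
    (hp₂ : ∀ ξ : ℝ, 2 ≤ |ξ| → p ξ = |ξ|) (hp₁ : ∀ ξ : ℝ, |ξ| ≤ 1 → p ξ = 1)
    -- the operators
    (T A : Lp ℂ 2 (volume : Measure ℝ) →L[ℂ] Lp ℂ 2 (volume.restrict (Ioo (0:ℝ) 1)))
    (hT : ∀ f : Lp ℂ 2 (volume : Measure ℝ),
      ∀ᵐ x ∂(volume.restrict (Ioo (0:ℝ) 1)),
        (T f : ℝ → ℂ) x = (Cstar (H x) : ℂ) *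
          ∫ ξ : ℝ, (Complex.exp (Complex.I * x * ξ) - 1) *
            ((|ξ| ^ (-(H x + 1/2)) : ℝ) : ℂ) * (f : ℝ → ℂ) ξ)
    (hA : ∀ f : Lp ℂ 2 (volume : Measure ℝ),
      ∀ᵐ x ∂(volume.restrict (Ioo (0:ℝ) 1)),
        (A f : ℝ → ℂ) x = (Cstar (H x) : ℂ) *
          ∫ ξ : ℝ, Complex.exp (Complex.I * x * ξ) *
            ((p ξ ^ (-(H x + 1/2)) : ℝ) : ℂ) * (f : ℝ → ℂ) ξ) :
    IsCompactOperator (⇑(T - A)) ∧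
    ∃ μ C : ℝ, 0 < μ ∧ 0 < C ∧ ∀ t : ℝ, 1 < t →
      (sCount (T - A) t : ℝ) ≤ C * t ^ (1 / (Hmin + 1/2) - μ) := by
  obtain ⟨hcompact, C, hC, hcount⟩ := mBM_operator_minus_psdo_counting_bound_general
    (hHol.continuousOn hr) hrange hpsm.continuous hppos two_pos hp₂ hT hA
  obtain ⟨x, hx, hxmin⟩ := hHmin.1
  have hHmin_pos : 0 < Hmin := hxmin ▸ (hrange x hx).1
  exact ⟨hcompact, exists_le_rpow_sub_of_le_log_pow hC hcount (by positivity)⟩
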